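/- One has Σ_{m=0}^{∞} m · ∫_0^1 ( m·(x − x²)^m + x·(x − x²)^m/(1 − x + x²) ) dx = (9 + 4√3·π)/54. -/

import Mathlib

open intervalIntegral Real

lemma aux_D (x : ℝ) : 0 < 1 - x + x ^ 2 := by nlinarith [sq_nonneg (2 * x - 1)]

lemma aux_sum (x : ℝ) (h0 : 0 ≤ x) (h1 : x ≤ 1) :
    HasSum (fun m : ℕ => (m : ℝ) * ((m : ℝ) * (x - x ^ 2) ^ m
      + x * (x - x ^ 2) ^ m / (1 - x + x ^ 2)))
      ((x - x ^ 2) * (1 + (x - x ^ 2)) / (1 - x + x ^ 2) ^ 3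
        + x * (x - x ^ 2) / (1 - x + x ^ 2) ^ 3) := by
  have hD := aux_D x
  have ht0 : 0 ≤ x - x ^ 2 := by nlinarith
  have ht : ‖x - x ^ 2‖ < 1 := by
    rw [Real.norm_eq_abs, abs_of_nonneg ht0]; linarith
  have A := hasSum_choose_mul_geometric_of_norm_lt_one 2 ht
  have B := hasSum_coe_mul_geometric_of_norm_lt_one ht
  have C := hasSum_geometric_of_norm_lt_one ht
  have E := (((A.mul_left 2).sub (B.mul_left 3)).sub (C.mul_left 2)).add
    (B.mul_left (x / (1 - x + x ^ 2)))
  have h1t : 1 - (x - x ^ 2) = 1 - x + x ^ 2 := by ring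
  rw [h1t] at E
  convert! E using 1
  · funext m
    rw [Nat.cast_choose_two]
    push_cast
    field_simp
    ring
  · have := hD.ne'
    field_simp
    ring

lemma aux_deriv (x : ℝ) :
    HasDerivAt (fun x : ℝ => 5 / 6 * (x - 1 / 2) / (1 - x + x ^ 2) ^ 2
      - 2 / 3 * (x - 1 / 2) / (1 - x + x ^ 2)
      + 2 / (3 * √3) * Real.arctan ((2 * x - 1) / √3)
      - 1 / 4 / (1 - x + x ^ 2) ^ 2 + 1 / 2 / (1 - x + x ^ 2))
      ((x - x ^ 2) * (1 + (x - x ^ 2)) / (1 - x + x ^ 2) ^ 3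
        + x * (x - x ^ 2) / (1 - x + x ^ 2) ^ 3) x := by
  have hD := (aux_D x).ne'
  have h3 : √3 ≠ 0 := by positivity
  have h33 : √3 ^ 2 = 3 := Real.sq_sqrt (by norm_num)
  have dx := hasDerivAt_id' x
  have dD : HasDerivAt (fun x : ℝ => 1 - x + x ^ 2) (-1 + 2 * x) x := by
    convert! (dx.const_sub 1).add (dx.pow 2) using 1
    simp
  have dD2 := dD.pow 2
  have du := (dx.sub_const (1 / 2))
  have hD2 : (1 - x + x ^ 2) ^ 2 ≠ 0 := pow_ne_zero _ hD
  have dA := ((((dx.const_mul 2).sub_const 1).div_const √3).arctan).const_mul (2 / (3 * √3))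
  have key := (((((du.const_mul (5 / 6)).div dD2 hD2).sub ((du.const_mul (2 / 3)).div dD hD)).add
    dA).sub ((hasDerivAt_const x (1 / 4 : ℝ)).div dD2 hD2)).add
    ((hasDerivAt_const x (1 / 2 : ℝ)).div dD hD)
  refine key.congr_deriv ?_
  have e : 2 / (3 * √3) * (1 / (1 + ((2 * x - 1) / √3) ^ 2) * (2 * 1 / √3))
      = 1 / 3 / (1 - x + x ^ 2) := by
    have h4 : 1 + ((2 * x - 1) / √3) ^ 2 = 4 / 3 * (1 - x + x ^ 2) := by
      rw [div_pow, h33]; ring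
    rw [h4]
    field_simp
    rw [h33]; norm_num
  rw [e]
  simp only [Pi.pow_apply]
  field_simp
  ring

/-- `Σ_{m=0}^∞ m ∫_0^1 (m (x−x²)^m + x (x−x²)^m/(1−x+x²)) dx = (9 + 4√3 π)/54`. -/
theorem stmt15 :
    (∑' m : ℕ, (m : ℝ) * ∫ x in (0 : ℝ)..1,
        ((m : ℝ) * (x - x ^ 2) ^ m + x * (x - x ^ 2) ^ m / (1 - x + x ^ 2)))
      = (9 + 4 * Real.sqrt 3 * π) / 54 := by
  have hc : ∀ m : ℕ, Continuous (fun x : ℝ => (m : ℝ) * ((m : ℝ) * (x - x ^ 2) ^ m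
      + x * (x - x ^ 2) ^ m / (1 - x + x ^ 2))) := by
    intro m
    have : ∀ x : ℝ, 1 - x + x ^ 2 ≠ 0 := fun x => (aux_D x).ne'
    fun_prop (disch := assumption)
  have hr : ‖(1 / 4 : ℝ)‖ < 1 := by norm_num
  have hs : Summable (fun m : ℕ => (m : ℝ) * ((m + 2) * (1 / 4 : ℝ) ^ m)) := by
    have a := summable_pow_mul_geometric_of_norm_lt_one 2 hr
    have b := (summable_pow_mul_geometric_of_norm_lt_one 1 hr).mul_left 2
    refine (a.add b).congr fun m => ?_
    ring
  have H := intervalIntegral.hasSum_integral_of_dominated_convergence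
    (μ := MeasureTheory.volume) (a := 0) (b := 1)
    (F := fun (m : ℕ) (x : ℝ) => (m : ℝ) * ((m : ℝ) * (x - x ^ 2) ^ m
      + x * (x - x ^ 2) ^ m / (1 - x + x ^ 2)))
    (f := fun x => (x - x ^ 2) * (1 + (x - x ^ 2)) / (1 - x + x ^ 2) ^ 3
        + x * (x - x ^ 2) / (1 - x + x ^ 2) ^ 3)
    (fun m _ => (m : ℝ) * ((m + 2) * (1 / 4 : ℝ) ^ m))
    (fun m => (hc m).aestronglyMeasurable)
    (fun m => Filter.Eventually.of_forall fun x hx => by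
      rw [Set.uIoc_of_le zero_le_one] at hx
      obtain ⟨h0, h1⟩ := hx
      have ht0 : 0 ≤ x - x ^ 2 := by nlinarith
      have ht1 : x - x ^ 2 ≤ 1 / 4 := by nlinarith [sq_nonneg (2 * x - 1)]
      have hD := aux_D x
      have hp : (x - x ^ 2) ^ m ≤ (1 / 4) ^ m := pow_le_pow_left₀ ht0 ht1 m
      have hp0 : 0 ≤ (x - x ^ 2) ^ m := pow_nonneg ht0 m
      rw [Real.norm_of_nonneg (by positivity)]
      refine mul_le_mul_of_nonneg_left ?_ (by positivity)
      have h2 : x * (x - x ^ 2) ^ m / (1 - x + x ^ 2) ≤ 2 * (1 / 4) ^ m := by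
        rw [div_le_iff₀ hD]
        have : x * (x - x ^ 2) ^ m ≤ 1 * (1 / 4) ^ m := by gcongr
        have h5 : (0 : ℝ) < (1 / 4) ^ m := by positivity
        nlinarith
      have h3 : (m : ℝ) * (x - x ^ 2) ^ m ≤ m * (1 / 4) ^ m := by gcongr
      linarith)
    (Filter.Eventually.of_forall fun x _ => hs)
    (by simp)
    (Filter.Eventually.of_forall fun x hx => by
      rw [Set.uIoc_of_le zero_le_one] at hx
      exact aux_sum x hx.1.le hx.2)
  simp only [intervalIntegral.integral_const_mul] at H
  rw [H.tsum_eq]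
  rw [intervalIntegral.integral_eq_sub_of_hasDerivAt (fun x _ => aux_deriv x)]
  · have h3 : √3 ≠ 0 := by positivity
    have h33 : √3 ^ 2 = 3 := Real.sq_sqrt (by norm_num)
    have ha : Real.arctan (1 / √3) = π / 6 := by
      rw [← Real.tan_pi_div_six]
      exact Real.arctan_tan (by linarith [Real.pi_pos]) (by linarith [Real.pi_pos])
    have e1 : ((2 * 1 - 1) / √3 : ℝ) = 1 / √3 := by norm_num
    have e0 : ((2 * 0 - 1) / √3 : ℝ) = -(1 / √3) := by ring
    rw [e1, e0, Real.arctan_neg, ha]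
    field_simp
    ring_nf
    rw [h33]; ring
  · apply Continuous.intervalIntegrable
    have : ∀ x : ℝ, (1 - x + x ^ 2) ^ 3 ≠ 0 := fun x => pow_ne_zero _ (aux_D x).ne'
    fun_prop (disch := assumption)
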